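/- For every n ≥ 1 and all primitive instructions u_1, …, u_n, the thread extracted from the repetition-free program u_1;…;u_n equals the thread extracted from u_1;…;u_n;(#0)^ω, i.e., |u_1;…;u_n| = |u_1;…;u_n;(#0)^ω|. -/

import Mathlib

/-- Primitive instructions over a set `A` of basic instructions:
basic instructions `a`, positive tests `+a`, negative tests `-a`,
jump instructions `#k` and the termination instruction `!`. -/
inductive PrimInstr (A : Type) : Type where
  | basic (a : A)
  | pos (a : A)
  | neg (a : A)
  | jump (k : Nat)
  | halt
deriving DecidableEq

/-- PGA-programs over `A`: primitive instructions, concatenation `X;Y`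
and repetition `X^ω`. -/
inductive PGA (A : Type) : Type where
  | prim (u : PrimInstr A)
  | seq (X Y : PGA A)
  | rep (X : PGA A)
deriving DecidableEq

/-- A SPI: a nonempty finite (list) or infinite (function) sequence of primitive
instructions.  (Nonemptiness always holds for denotations of PGA-programs.) -/
abbrev SPI (A : Type) : Type := List (PrimInstr A) ⊕ (ℕ → PrimInstr A)

/-- Concatenation of SPIs; if the first one is infinite, it is the result. -/
def SPI.seqc {A : Type} : SPI A → SPI A → SPI A
  | .inl l, .inl l' => .inl (l ++ l')
  | .inl l, .inr s => .inr fun n => if h : n < l.length then l.get ⟨n, h⟩ else s (n - l.length)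
  | .inr s, _ => .inr s

/-- Infinite repetition of a SPI; an infinite SPI is its own repetition.
(The `getD`-default is never relevant: SPIs of PGA-programs are nonempty.) -/
def SPI.omega {A : Type} : SPI A → SPI A
  | .inl l => .inr fun n => l.getD (n % l.length) .halt
  | .inr s => .inr s

/-- The SPI denoted by a PGA-program. -/
def PGA.spi {A : Type} : PGA A → SPI A
  | .prim u => .inl [u]
  | .seq X Y => X.spi.seqc Y.spi
  | .rep X => X.spi.omega

/-- The instruction of a SPI at a (0-based) position, if any. -/
def SPI.at? {A : Type} : SPI A → ℕ → Option (PrimInstr A)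
  | .inl l, n => l[n]?
  | .inr s, n => some (s n)

/-- The polynomial functor `X ↦ {S} ⊕ {D} ⊕ A × X × X` whose final coalgebra
is the type of threads. -/
def ThreadF (A : Type) : PFunctor.{0} :=
  ⟨Unit ⊕ Unit ⊕ A, fun s => match s with
    | .inl _ => Empty
    | .inr (.inl _) => Empty
    | .inr (.inr _) => Bool⟩

/-- Threads over `A`: the final coalgebra (coinductive type) generated by
termination `S`, deadlock `D` and postconditional composition. -/
def ThreadT (A : Type) : Type := PFunctor.M (ThreadF A)

/-- The terminating thread `S`. -/
def ThreadT.S {A : Type} : ThreadT A := PFunctor.M.mk ⟨Sum.inl (), Empty.elim⟩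

/-- The deadlocking (inactive) thread `D`. -/
def ThreadT.D {A : Type} : ThreadT A := PFunctor.M.mk ⟨Sum.inr (Sum.inl ()), Empty.elim⟩

/-- Postconditional composition `P ⊴ a ⊵ Q` (continue as `P` on reply `true`
to `a`, as `Q` on reply `false`).  Action prefix `a ∘ P` is `P ⊴ a ⊵ P`. -/
def ThreadT.post {A : Type} (a : A) (P Q : ThreadT A) : ThreadT A :=
  PFunctor.M.mk ⟨Sum.inr (Sum.inr a), fun b => match b with | true => P | false => Q⟩

/-- The size of a proper jump instruction (`#m` with `m ≥ 1`), if any. -/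
def jumpSize {A : Type} : Option (PrimInstr A) → Option ℕ
  | some (.jump (m+1)) => some (m+1)
  | _ => none

/-- Following the chain of (proper) jumps of `σ` starting at position `j`. -/
def jchain {A : Type} (σ : ℕ → Option (PrimInstr A)) (j : ℕ) : ℕ → ℕ
  | 0 => j
  | k+1 =>
    match jumpSize (σ (jchain σ j k)) with
    | some m => jchain σ j k + m
    | none => jchain σ j k

open Classical in
/-- One step of thread extraction at position `j` of the instruction sequence `σ`:
first resolve the chain of jumps from `j` (an infinite chain of jumps yields
deadlock `D`, as does jumping outside of the sequence or reaching `#0`), then read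
off the instruction: `!` gives `S`, a basic instruction `a` gives action prefix
with both continuations at the next position, a positive (negative) test gives
postconditional composition continuing at the next position upon `true` (`false`)
and at the position thereafter upon `false` (`true`). -/
noncomputable def xstep {A : Type} (σ : ℕ → Option (PrimInstr A)) (j : ℕ) :
    (ThreadF A).Obj ℕ :=
  haveI : DecidablePred fun k => jumpSize (σ (jchain σ j k)) = none := fun _ => inferInstance
  if h : ∃ k, jumpSize (σ (jchain σ j k)) = none then
    let j' := jchain σ j (Nat.find h)
    match σ j' with
    | some .halt => ⟨Sum.inl (), Empty.elim⟩
    | some (.basic a) => ⟨Sum.inr (Sum.inr a), fun _ => j' + 1⟩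
    | some (.pos a) => ⟨Sum.inr (Sum.inr a), fun b => match b with | true => j' + 1 | false => j' + 2⟩
    | some (.neg a) => ⟨Sum.inr (Sum.inr a), fun b => match b with | true => j' + 2 | false => j' + 1⟩
    | _ => ⟨Sum.inr (Sum.inl ()), Empty.elim⟩
  else ⟨Sum.inr (Sum.inl ()), Empty.elim⟩

/-- Thread extraction from an instruction-lookup function, starting at
(0-based) position `j₀`. -/
noncomputable def extractFrom {A : Type} (σ : ℕ → Option (PrimInstr A)) (j₀ : ℕ) : ThreadT A :=
  PFunctor.M.corec (xstep σ) j₀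

/-- Thread extraction `|X|` on PGA-programs: extraction along the SPI denoted
by `X`, starting at its first instruction.  This realizes exactly the defining
equations of thread extraction (Table 2 of the paper). -/
noncomputable def PGA.thread {A : Type} (X : PGA A) : ThreadT A :=
  extractFrom X.spi.at? 0

/-- `fromL u [v_1, …, v_n]` is the repetition-free program `u ; v_1 ; … ; v_n`. -/
def fromL {A : Type} : PrimInstr A → List (PrimInstr A) → PGA A
  | u, [] => .prim u
  | u, v :: l => (PGA.prim u).seq (fromL v l)

theorem pad_jchain {A : Type} (σ τ : ℕ → Option (PrimInstr A))
    (hj : ∀ n, jumpSize (σ n) = jumpSize (τ n)) (j k : ℕ) : jchain σ j k = jchain τ j k := by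
  induction k with
  | zero => rfl
  | succ k ih => simp only [jchain, hj, ih]

def padOut {A : Type} (i : Option (PrimInstr A)) (j' : ℕ) : (ThreadF A).Obj ℕ :=
  match i with
  | some .halt => ⟨Sum.inl (), Empty.elim⟩
  | some (.basic a) => ⟨Sum.inr (Sum.inr a), fun _ => j' + 1⟩
  | some (.pos a) => ⟨Sum.inr (Sum.inr a), fun b => match b with | true => j' + 1 | false => j' + 2⟩
  | some (.neg a) => ⟨Sum.inr (Sum.inr a), fun b => match b with | true => j' + 2 | false => j' + 1⟩
  | _ => ⟨Sum.inr (Sum.inl ()), Empty.elim⟩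

def padGen {A : Type} (p : ℕ → Prop) (i₁ : DecidablePred p)
    (i₂ : Decidable (∃ k, p k)) (c : ℕ → ℕ) (o : ℕ → (ThreadF A).Obj ℕ) :
    (ThreadF A).Obj ℕ :=
  if h : ∃ k, p k then o (c (Nat.find h)) else ⟨Sum.inr (Sum.inl ()), Empty.elim⟩

theorem padGen_congr {A : Type} (p q : ℕ → Prop) (i₁ : DecidablePred p)
    (i₂ : Decidable (∃ k, p k)) (i₃ : DecidablePred q)
    (i₄ : Decidable (∃ k, q k)) (c d : ℕ → ℕ) (o : ℕ → (ThreadF A).Obj ℕ) (h : p = q)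
    (hcd : c = d) :
    padGen p i₁ i₂ c o = padGen q i₃ i₄ d o := by
  subst h hcd
  rw [Subsingleton.elim i₁ i₃, Subsingleton.elim i₂ i₄]

theorem pad_xstep_eq {A : Type} (σ : ℕ → Option (PrimInstr A)) (j : ℕ) :
    ∃ i₁ i₂, xstep σ j = padGen (fun k => jumpSize (σ (jchain σ j k)) = none) i₁ i₂ (jchain σ j)
      (fun m => padOut (σ m) m) := 
  ⟨_, _, rfl⟩

theorem pad_xstep {A : Type} (σ τ : ℕ → Option (PrimInstr A))
    (hs : ∀ n, σ n = τ n ∨ (σ n = none ∧ τ n = some (.jump 0))) : xstep σ = xstep τ := by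
  have hj : ∀ n, jumpSize (σ n) = jumpSize (τ n) := by
    intro n
    rcases hs n with h | ⟨h1, h2⟩
    · rw [h]
    · rw [h1, h2]; rfl
  funext j
  have hc : jchain σ j = jchain τ j := funext (pad_jchain σ τ hj j)
  have ho : (fun m => padOut (σ m) m) = (fun m => padOut (τ m) m) := by
    funext m
    rcases hs m with h | ⟨h1, h2⟩
    · rw [h]
    · rw [h1, h2]; rfl
  obtain ⟨i₁, i₂, e₁⟩ := pad_xstep_eq σ j
  obtain ⟨i₃, i₄, e₂⟩ := pad_xstep_eq τ j
  rw [e₁, e₂, ho]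
  refine padGen_congr _ _ _ _ _ _ _ _ _ ?_ hc
  funext k
  rw [hj, hc]

theorem pad_spi {A : Type} (u : PrimInstr A) (us : List (PrimInstr A)) :
    (fromL u us).spi = .inl (u :: us) := by
  induction us generalizing u with
  | nil => rfl
  | cons v l ih => simp [fromL, PGA.spi, ih, SPI.seqc]

/-- For all primitive instructions `u_1, …, u_n` (`n ≥ 1`):
`|u_1 ; … ; u_n| = |u_1 ; … ; u_n ; (#0)^ω|`. -/
theorem thread_extraction_pad_zero (A : Type) (u : PrimInstr A)
    (us : List (PrimInstr A)) :
    (fromL u us).thread = ((fromL u us).seq (PGA.rep (.prim (.jump 0)))).thread := by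
  unfold PGA.thread extractFrom
  rw [pad_xstep _ ((fromL u us).seq (PGA.rep (.prim (.jump 0)))).spi.at?]
  intro n
  simp only [PGA.spi, pad_spi, SPI.seqc, SPI.omega, SPI.at?]
  by_cases hn : n < (u :: us).length
  · left
    rw [dif_pos hn, List.getElem?_eq_getElem hn]; rfl
  · right
    rw [dif_neg hn]
    refine ⟨List.getElem?_eq_none (by omega), ?_⟩
    simp [Nat.mod_one]
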